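/- Let T = [[t₁, t₂/2],[t₂/2, t₃]] with t₁, t₂, t₃ ∈ ℤ and det(T) ≠ 0, and write T(x,y) = t₁x² + t₂xy + t₃y². Then for every ε > 0 there is a constant C(ε) such that for all X ≥ 1 and all nonzero integers n, the number of pairs (x,y) ∈ ℤ² with T(x,y) = n and |x| + |y| ≤ X is at most C(ε)·(|n|·X·‖T‖)^ε, where ‖T‖ = max(|t₁|,|t₂|,|t₃|). -/

import Mathlib

/-
Put `Δ = t₂² - 4t₁t₃`. Since `4t₁ T(x, y) = (2t₁x + t₂y)² - Δy²`, the representations of `n` by `T`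
inject into the elements of norm `m = 4t₁n` of `ℤ[√Δ]`, hence into those of `ℤ[√D]` with `D` the
squarefree part of `Δ`; if `t₁ = 0` the form factors and `y` divides `n`.

The gcd of the coordinates of such an element takes at most `τ(m)` values, so we may look at
primitive elements. A primitive `α = u + v√D` of norm `m` determines a square root `r ≡ u/v` of `D`
modulo `m`. Fix one root `r₀` and sort the others by `gcd(r - r₀, m)`: as `D` is squarefree, two
roots `r`, `s` with the same gcd satisfy `m ∣ 2(r - s)`. Then `m` divides `2αβ̄`, and the quotient
has norm `4`, so `α` is recovered from a fixed `β` and an element of norm `4`. Elements of norm `4`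
with prescribed signs at least double in size from each to the next, uniformly in `D`, so only
logarithmically many lie in the box. The total is `O(log(2X‖T‖) τ(m)²)`, and the divisor bound
finishes.
-/

section SquareRoots

lemma dvd_of_sq_dvd_sq_mul_squarefree {R : Type*} [CommMonoidWithZero R] [GCDMonoid R]
    {a b d : R} (hd : Squarefree d) (h : a ^ 2 ∣ b ^ 2 * d) : a ∣ b := by
  rcases eq_or_ne b 0 with rfl | hb
  · exact dvd_zero a
  obtain ⟨a', b', ha, hb', hab⟩ := extract_gcd a b
  set g := gcd a b
  have hg : g ≠ 0 := by
    rintro hg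
    exact hb (by rw [hb', hg, zero_mul])
  have ha'd : a' ^ 2 ∣ b' ^ 2 * d := by
    rwa [ha, hb', mul_pow, mul_pow, mul_assoc, mul_dvd_mul_iff_left (pow_ne_zero 2 hg)] at h
  have hrel : IsRelPrime (a' ^ 2) (b' ^ 2) := (gcd_isUnit_iff_isRelPrime.mp hab).pow
  have hunit : IsUnit a' := hd a' (sq a' ▸ hrel.dvd_of_dvd_mul_left ha'd)
  rw [ha, hb']
  exact mul_dvd_mul_left g hunit.dvd

lemma exists_eq_sq_mul_squarefree {D : ℤ} (hD : D ≠ 0) :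
    ∃ f d : ℤ, f ≠ 0 ∧ Squarefree d ∧ D = f ^ 2 * d := by
  obtain ⟨d, f, hfd, hd⟩ := Nat.sq_mul_squarefree D.natAbs
  refine ⟨f, D.sign * d, ?_, ?_, ?_⟩
  · rintro hf
    have : D.natAbs = 0 := by rw [← hfd, Int.natCast_eq_zero.mp hf, zero_pow two_ne_zero, zero_mul]
    exact hD (Int.natAbs_eq_zero.mp this)
  · rw [← Int.squarefree_natAbs]
    simpa [Int.natAbs_mul, Int.natAbs_sign_of_ne_zero hD] using hd
  · rw [mul_left_comm]
    exact_mod_cast hfd ▸ (Int.sign_mul_natAbs D).symm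

lemma gcd_dvd_two_of_squarefree {D d k r t : ℤ} (hD : Squarefree D) (ht : d * k ∣ t ^ 2 - D)
    (hd : d ∣ r - t) (hk : k ∣ r + t) : gcd d k ∣ 2 := by
  have hgt : gcd d k ∣ 2 * t := by
    rw [show 2 * t = (r + t) - (r - t) by ring]
    exact dvd_sub ((gcd_dvd_right d k).trans hk) ((gcd_dvd_left d k).trans hd)
  have hgD : gcd d k ^ 2 ∣ t ^ 2 - D :=
    (sq (gcd d k) ▸ mul_dvd_mul (gcd_dvd_left d k) (gcd_dvd_right d k)).trans ht
  refine dvd_of_sq_dvd_sq_mul_squarefree hD ?_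
  rw [show 2 ^ 2 * D = (2 * t) ^ 2 - 4 * (t ^ 2 - D) by ring]
  exact dvd_sub (pow_dvd_pow_of_dvd hgt 2) (hgD.mul_left 4)

lemma dvd_gcd_mul_add_of_dvd_sq_sub {D m r t : ℤ} (hr : m ∣ r ^ 2 - D) (ht : m ∣ t ^ 2 - D) :
    m ∣ Int.gcd (r - t) m * (r + t) := by
  rw [Int.gcd_comm, Int.coe_gcd]
  refine dvd_gcd_mul_of_dvd_mul ?_
  rw [mul_comm, ← sq_sub_sq, ← sub_sub_sub_cancel_right _ _ D]
  exact dvd_sub hr ht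

-- Writing `m = d * k` with `d` the common gcd, `r ≡ s` modulo both `d` and `k`, hence modulo
-- `lcm d k = m / gcd d k`; squarefreeness of `D` forces `gcd d k ∣ 2`.
lemma dvd_two_mul_sub_of_gcd_eq {D m r s t : ℤ} (hD : Squarefree D) (hm : m ≠ 0)
    (hr : m ∣ r ^ 2 - D) (hs : m ∣ s ^ 2 - D) (ht : m ∣ t ^ 2 - D)
    (hgcd : Int.gcd (r - t) m = Int.gcd (s - t) m) : m ∣ 2 * (r - s) := by
  have hkr := dvd_gcd_mul_add_of_dvd_sq_sub hr ht
  have hks := dvd_gcd_mul_add_of_dvd_sq_sub hs ht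
  have hdr := Int.gcd_dvd_left (r - t) m
  have hds := Int.gcd_dvd_left (s - t) m
  rw [← hgcd] at hks hds
  obtain ⟨k, hk⟩ := Int.gcd_dvd_right (r - t) m
  generalize (Int.gcd (r - t) m : ℤ) = d at *
  subst hk
  have hd0 : d ≠ 0 := left_ne_zero_of_mul hm
  rw [mul_dvd_mul_iff_left hd0] at hkr hks
  have hlcm : lcm d k ∣ r - s :=
    lcm_dvd (by simpa using dvd_sub hdr hds) (by simpa using dvd_sub hkr hks)
  calc d * k ∣ gcd d k * lcm d k := (gcd_mul_lcm d k).symm.dvd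
    _ ∣ 2 * (r - s) := mul_dvd_mul (gcd_dvd_two_of_squarefree hD ht hdr hkr) hlcm

end SquareRoots

section NormFour

lemma six_le_of_sq_sub_eq_four {D x y x' y' : ℤ} (hD : 0 < D) (hx : 0 < x) (hlt : x < x')
    (h : x ^ 2 - D * y ^ 2 = 4) (h' : x' ^ 2 - D * y' ^ 2 = 4) : 6 ≤ x * x' - D * y * y' := by
  obtain ⟨⟨A, hA⟩, ⟨B, hB⟩⟩ : Even (x * x' - D * y * y') ∧ Even (x * y' - x' * y) := by
    have hxy : Even (x ^ 2 - D * y ^ 2) := by rw [h]; decide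
    have hxy' : Even (x' ^ 2 - D * y' ^ 2) := by rw [h']; decide
    simp only [Int.even_sub, Int.even_mul, Int.even_pow] at hxy hxy' ⊢
    tauto
  have hAB : A ^ 2 - D * B ^ 2 = 4 := by
    have hmul : (A + A) ^ 2 - D * (B + B) ^ 2 = 4 * 4 := by
      rw [← hA, ← hB]
      linear_combination (x' ^ 2 - D * y' ^ 2) * h + 4 * h'
    linarith
  have hB0 : B ≠ 0 := by
    rintro rfl
    have : (x * y') ^ 2 = (x' * y) ^ 2 := by rw [sub_eq_zero.mp hB]
    nlinarith
  have hA0 : 0 < A := by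
    have hlt' : |D * y * y'| < x * x' := by
      refine abs_lt_of_sq_lt_sq ?_ (mul_pos hx (hx.trans hlt)).le
      nlinarith [mul_nonneg hD.le (sq_nonneg y)]
    linarith [le_abs_self (D * y * y')]
  have hA2 : 2 < A := by
    have : 0 < D * B ^ 2 := by positivity
    nlinarith
  linarith

lemma two_mul_le_of_sq_sub_eq_four {D x y x' y' : ℤ} (hD : D ≠ 0) (hx : 0 < x) (hy : y ≠ 0)
    (hlt : x < x') (h : x ^ 2 - D * y ^ 2 = 4) (h' : x' ^ 2 - D * y' ^ 2 = 4) :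
    2 * x ≤ x' := by
  rcases hD.lt_or_gt with hD | hD
  · have : x' ≤ 2 := by nlinarith [mul_nonneg (neg_nonneg.mpr hD.le) (sq_nonneg y')]
    linarith
  · have hle : |D * y * y'| ≤ x * x' - 6 := by
      have hpos := six_le_of_sq_sub_eq_four hD hx hlt h h'
      have hneg := six_le_of_sq_sub_eq_four hD hx hlt h (y' := -y') (by rwa [neg_sq])
      exact abs_le.mpr ⟨by linarith, by linarith⟩
    have hx3 : 3 ≤ x := by
      have : 0 < D * y ^ 2 := by positivity
      nlinarith
    have hsq : 3 * (x * x') ≤ x ^ 2 + x' ^ 2 + 5 := by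
      have := sq_le_sq' (by linarith [abs_nonneg (D * y * y')]) hle
      rw [sq_abs] at this
      have : (D * y * y') ^ 2 = (x ^ 2 - 4) * (x' ^ 2 - 4) := by
        linear_combination (4 - x' ^ 2) * h - D * y ^ 2 * h'
      linarith
    by_contra! hlt2
    have hlow : 0 ≤ x' - (x + 1) := by linarith
    have hupp : 0 ≤ 2 * x - 1 - x' := by linarith
    nlinarith [mul_nonneg hlow hupp]

lemma natAbs_re_le_of_norm_eq_four {D : ℤ} (hD : D ≠ 0) {γ γ' : ℤ√D}
    (h : γ.norm = 4) (h' : γ'.norm = 4)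
    (hre : SignType.sign γ.re = SignType.sign γ'.re)
    (him : SignType.sign γ.im = SignType.sign γ'.im)
    (hlog : Nat.log 2 γ.re.natAbs = Nat.log 2 γ'.re.natAbs) : γ'.re.natAbs ≤ γ.re.natAbs := by
  have norm_eq (δ : ℤ√D) (hδ : δ.norm = 4) : (δ.re.natAbs : ℤ) ^ 2 - D * δ.im ^ 2 = 4 := by
    rw [Int.natAbs_sq, ← hδ, Zsqrtd.norm_def]
    ring
  by_contra! hlt
  have hre0 : γ.re ≠ 0 := by
    intro h0
    have h0' : γ'.re = 0 := by rwa [h0, sign_zero, eq_comm, sign_eq_zero_iff] at hre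
    simp [h0, h0'] at hlt
  have him0 : γ.im ≠ 0 := by
    intro h0
    have h0' : γ'.im = 0 := by rwa [h0, sign_zero, eq_comm, sign_eq_zero_iff] at him
    have hsq := (norm_eq γ h).trans (norm_eq γ' h').symm
    rw [h0, h0', sub_left_inj] at hsq
    exact (pow_lt_pow_left₀ hlt (Nat.zero_le _) two_ne_zero).ne (by exact_mod_cast hsq)
  have hgap : γ.re.natAbs * 2 ≤ γ'.re.natAbs := by
    have := two_mul_le_of_sq_sub_eq_four hD (by omega) him0 (by exact_mod_cast hlt)
      (norm_eq γ h) (norm_eq γ' h')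
    omega
  have hlog_le := Nat.log_mono_right (b := 2) hgap
  rw [Nat.log_mul_base one_lt_two (Int.natAbs_ne_zero.mpr hre0)] at hlog_le
  omega

lemma card_le_of_norm_eq_four {D : ℤ} (hD : D ≠ 0) {R : ℕ} {s : Finset (ℤ√D)}
    (hnorm : ∀ γ ∈ s, γ.norm = 4) (hR : ∀ γ ∈ s, γ.re.natAbs ≤ R) :
    s.card ≤ 9 * (Nat.log 2 R + 1) := by
  have eq_of_sign_eq {a b : ℤ} (hsign : SignType.sign a = SignType.sign b) (h : |a| = |b|) :
      a = b := by
    rw [← sign_mul_abs a, ← sign_mul_abs b, h, hsign]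
  let code (γ : ℤ√D) : (SignType × SignType) × ℕ :=
    ((SignType.sign γ.re, SignType.sign γ.im), Nat.log 2 γ.re.natAbs)
  have hinj : Set.InjOn code s := by
    intro γ hγ γ' hγ' hcode
    simp only [code, Prod.mk.injEq] at hcode
    obtain ⟨⟨hre, him⟩, hlog⟩ := hcode
    have h := hnorm γ hγ
    have h' := hnorm γ' hγ'
    have hre_eq : γ.re = γ'.re := eq_of_sign_eq hre <| by
      rw [Int.abs_eq_natAbs, Int.abs_eq_natAbs, le_antisymm
        (natAbs_re_le_of_norm_eq_four hD h' h hre.symm him.symm hlog.symm)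
        (natAbs_re_le_of_norm_eq_four hD h h' hre him hlog)]
    have him_sq : γ.im ^ 2 = γ'.im ^ 2 := by
      refine mul_left_cancel₀ hD ?_
      rw [Zsqrtd.norm_def] at h h'
      rw [hre_eq] at h
      linarith
    exact Zsqrtd.ext hre_eq (eq_of_sign_eq him ((sq_eq_sq_iff_abs_eq_abs _ _).mp him_sq))
  calc s.card ≤ (Finset.univ ×ˢ Finset.range (Nat.log 2 R + 1)).card := by
        refine Finset.card_le_card_of_injOn code (fun γ hγ ↦ ?_) hinj
        simpa [code, Nat.lt_succ_iff] using Nat.log_mono_right (hR γ hγ)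
    _ = 9 * (Nat.log 2 R + 1) := by
        rw [Finset.card_product, Finset.card_range]
        rfl

end NormFour

section NormEquation

lemma exists_sqrt_mod_norm {D : ℤ} {α : ℤ√D} (h : IsCoprime α.re α.im) :
    ∃ r : ℤ, α.norm ∣ r ^ 2 - D ∧ α.norm ∣ α.re - r * α.im := by
  have him : IsCoprime α.im α.norm := by
    rw [Zsqrtd.norm_def, sub_eq_add_neg, ← neg_mul]
    exact (h.symm.mul_right h.symm).add_mul_right_right _
  obtain ⟨a, b, hab⟩ := him
  have hlift : α.norm ∣ α.re - α.re * a * α.im := ⟨α.re * b, by linear_combination -α.re * hab⟩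
  refine ⟨α.re * a, ?_, hlift⟩
  have hsq : α.norm ∣ α.im ^ 2 * ((α.re * a) ^ 2 - D) := by
    rw [show α.im ^ 2 * ((α.re * a) ^ 2 - D) =
      α.norm - (α.re - α.re * a * α.im) * (α.re + α.re * a * α.im) by rw [Zsqrtd.norm_def]; ring]
    exact dvd_sub dvd_rfl (hlift.mul_right _)
  exact IsCoprime.dvd_of_dvd_mul_left (IsCoprime.pow_right ⟨b, a, by linarith⟩) hsq

lemma intCast_dvd_two_mul_mul_star {D m r s : ℤ} {α β : ℤ√D} (hr : m ∣ r ^ 2 - D)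
    (hα : m ∣ α.re - r * α.im) (hβ : m ∣ β.re - s * β.im) (hrs : m ∣ 2 * (r - s)) :
    (m : ℤ√D) ∣ 2 * (α * star β) := by
  obtain ⟨a, ha⟩ := hα
  obtain ⟨b, hb⟩ := hβ
  obtain ⟨c, hc⟩ := hr
  obtain ⟨e, he⟩ := hrs
  rw [Zsqrtd.intCast_dvd]
  constructor
  · refine ⟨2 * a * β.re + 2 * r * α.im * b + α.im * β.im * (2 * c - r * e), ?_⟩
    simp only [Zsqrtd.re_mul, Zsqrtd.im_mul, Zsqrtd.re_star, Zsqrtd.im_star, Zsqrtd.re_ofNat,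
      Zsqrtd.im_ofNat, Nat.cast_ofNat]
    linear_combination 2 * β.re * ha + 2 * r * α.im * hb + 2 * α.im * β.im * hc -
      r * α.im * β.im * he
  · refine ⟨2 * α.im * b - 2 * β.im * a - α.im * β.im * e, ?_⟩
    simp only [Zsqrtd.re_mul, Zsqrtd.im_mul, Zsqrtd.re_star, Zsqrtd.im_star, Zsqrtd.re_ofNat,
      Zsqrtd.im_ofNat, Nat.cast_ofNat]
    linear_combination 2 * α.im * hb - 2 * β.im * ha - α.im * β.im * he

lemma norm_eq_four_of_two_mul_mul_star {D m : ℤ} (hm : m ≠ 0) {α β γ : ℤ√D}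
    (hα : α.norm = m) (hβ : β.norm = m) (h : 2 * (α * star β) = m * γ) : γ.norm = 4 := by
  have hnorm := congrArg Zsqrtd.norm h
  rw [Zsqrtd.norm_mul, Zsqrtd.norm_mul, Zsqrtd.norm_mul, Zsqrtd.norm_conj, Zsqrtd.norm_intCast,
    hα, hβ, mul_comm] at hnorm
  exact (mul_left_cancel₀ (mul_ne_zero hm hm) hnorm).symm.trans (Zsqrtd.norm_natCast 2)

lemma abs_mul_im_sq_le {D : ℤ} (α : ℤ√D) : |D| * α.im ^ 2 ≤ α.re ^ 2 + |α.norm| := by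
  calc |D| * α.im ^ 2 = |α.re ^ 2 - α.norm| := by
        rw [← abs_sq α.im, ← abs_mul, Zsqrtd.norm_def]
        ring_nf
    _ ≤ |α.re ^ 2| + |α.norm| := abs_sub _ _
    _ = α.re ^ 2 + |α.norm| := by rw [abs_sq]

lemma two_mul_abs_re_mul_star_le {D : ℤ} (α β : ℤ√D) :
    2 * |(α * star β).re| ≤ 2 * (α.re ^ 2 + β.re ^ 2) + |α.norm| + |β.norm| := by
  have hre : 2 * (|α.re| * |β.re|) ≤ α.re ^ 2 + β.re ^ 2 := by
    rw [← sq_abs α.re, ← sq_abs β.re, ← mul_assoc]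
    exact two_mul_le_add_sq _ _
  have him : |D| * (2 * (|α.im| * |β.im|)) ≤ |D| * (α.im ^ 2 + β.im ^ 2) := by
    rw [← sq_abs α.im, ← sq_abs β.im, ← mul_assoc 2]
    exact mul_le_mul_of_nonneg_left (two_mul_le_add_sq _ _) (abs_nonneg D)
  calc 2 * |(α * star β).re| = 2 * |α.re * β.re - D * (α.im * β.im)| := by
        simp [sub_eq_add_neg, mul_assoc]
    _ ≤ 2 * (|α.re| * |β.re| + |D| * (|α.im| * |β.im|)) := by
        gcongr
        simpa only [abs_mul] using abs_sub (α.re * β.re) (D * (α.im * β.im))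
    _ ≤ 2 * (α.re ^ 2 + β.re ^ 2) + |α.norm| + |β.norm| := by
        linarith [abs_mul_im_sq_le α, abs_mul_im_sq_le β]

lemma natAbs_re_le_of_two_mul_mul_star {D m : ℤ} (hm : m ≠ 0) {U : ℕ} {α β γ : ℤ√D}
    (hα : α.norm = m) (hβ : β.norm = m) (hαU : α.re.natAbs ≤ U) (hβU : β.re.natAbs ≤ U)
    (h : 2 * (α * star β) = m * γ) : γ.re.natAbs ≤ 4 * U ^ 2 + 2 := by
  have re_sq_le {δ : ℤ√D} (hδ : δ.re.natAbs ≤ U) : δ.re ^ 2 ≤ (U : ℤ) ^ 2 := by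
    rw [← Int.natAbs_sq]
    exact_mod_cast Nat.pow_le_pow_left hδ 2
  have hm1 : 1 ≤ |m| := Int.one_le_abs hm
  have hle : |m| * |γ.re| ≤ |m| * (4 * U ^ 2 + 2) := by
    calc |m| * |γ.re| = 2 * |(α * star β).re| := by
          rw [← abs_mul, ← Zsqrtd.re_smul, ← h, ← abs_two (α := ℤ), ← abs_mul, ← Zsqrtd.re_smul]
          rfl
      _ ≤ 4 * U ^ 2 + 2 * |m| := by
          have := two_mul_abs_re_mul_star_le α β
          rw [hα, hβ] at this
          linarith [re_sq_le hαU, re_sq_le hβU]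
      _ ≤ |m| * (4 * U ^ 2 + 2) := by nlinarith [sq_nonneg (U : ℤ)]
  have := le_of_mul_le_mul_left hle (by linarith)
  rw [Int.abs_eq_natAbs] at this
  exact_mod_cast this

lemma card_le_of_dvd_two_mul_mul_star {D m : ℤ} (hD : D ≠ 0) (hm : m ≠ 0) {U : ℕ}
    {s : Finset (ℤ√D)} (hnorm : ∀ α ∈ s, α.norm = m) (hU : ∀ α ∈ s, α.re.natAbs ≤ U)
    (hdvd : ∀ α ∈ s, ∀ β ∈ s, (m : ℤ√D) ∣ 2 * (α * star β)) :
    s.card ≤ 9 * (Nat.log 2 (4 * U ^ 2 + 2) + 1) := by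
  rcases s.eq_empty_or_nonempty with rfl | ⟨β, hβ⟩
  · simp
  choose! quot hquot using fun α hα ↦ hdvd α hα β hβ
  have hinj : Set.InjOn quot s := by
    intro α hα α' hα' heq
    have hstar : 2 * (α * star β) = 2 * (α' * star β) := by rw [hquot α hα, hquot α' hα', heq]
    refine Zsqrtd.eq_of_smul_eq_smul_left (mul_ne_zero two_ne_zero hm) ?_
    push_cast
    rw [← hnorm β hβ, Zsqrtd.norm_eq_mul_conj]
    linear_combination β * hstar
  rw [← Finset.card_image_of_injOn hinj]
  refine card_le_of_norm_eq_four hD ?_ ?_ <;> rw [Finset.forall_mem_image] <;> intro α hα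
  · exact norm_eq_four_of_two_mul_mul_star hm (hnorm α hα) (hnorm β hβ) (hquot α hα)
  · exact natAbs_re_le_of_two_mul_mul_star hm (hnorm α hα) (hnorm β hβ) (hU α hα) (hU β hβ)
      (hquot α hα)

lemma card_le_of_norm_eq_of_isCoprime {D m : ℤ} (hD : Squarefree D) (hm : m ≠ 0) {U : ℕ}
    {s : Finset (ℤ√D)} (hnorm : ∀ α ∈ s, α.norm = m) (hU : ∀ α ∈ s, α.re.natAbs ≤ U)
    (hcop : ∀ α ∈ s, IsCoprime α.re α.im) :
    s.card ≤ 9 * (Nat.log 2 (4 * U ^ 2 + 2) + 1) * m.natAbs.divisors.card := by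
  rcases s.eq_empty_or_nonempty with rfl | ⟨α₀, hα₀⟩
  · simp
  have hroot : ∀ α ∈ s, ∃ r : ℤ, m ∣ r ^ 2 - D ∧ m ∣ α.re - r * α.im := fun α hα ↦
    hnorm α hα ▸ exists_sqrt_mod_norm (hcop α hα)
  choose! root hsqrt hlift using hroot
  refine Finset.card_le_mul_card_image_of_maps_to
    (f := fun α ↦ Int.gcd (root α - root α₀) m) (fun α _ ↦ ?_) _ (fun d _ ↦ ?_)
  · exact Nat.mem_divisors.mpr
      ⟨Int.natCast_dvd.mp (Int.gcd_dvd_right _ _), Int.natAbs_ne_zero.mpr hm⟩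
  · refine card_le_of_dvd_two_mul_mul_star hD.ne_zero hm
      (fun α hα ↦ hnorm α (Finset.mem_filter.mp hα).1)
      (fun α hα ↦ hU α (Finset.mem_filter.mp hα).1) (fun α hα β hβ ↦ ?_)
    obtain ⟨hα, hαd⟩ := Finset.mem_filter.mp hα
    obtain ⟨hβ, hβd⟩ := Finset.mem_filter.mp hβ
    exact intCast_dvd_two_mul_mul_star (hsqrt α hα) (hlift α hα) (hlift β hβ)
      (dvd_two_mul_sub_of_gcd_eq hD hm (hsqrt α hα) (hsqrt β hβ) (hsqrt α₀ hα₀)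
        (hαd.trans hβd.symm))

lemma card_le_of_norm_eq_of_gcd_eq {D m : ℤ} (hD : Squarefree D) (hm : m ≠ 0) {g U : ℕ}
    {s : Finset (ℤ√D)} (hnorm : ∀ α ∈ s, α.norm = m) (hU : ∀ α ∈ s, α.re.natAbs ≤ U)
    (hg : ∀ α ∈ s, Int.gcd α.re α.im = g) :
    s.card ≤ 9 * (Nat.log 2 (4 * U ^ 2 + 2) + 1) * m.natAbs.divisors.card := by
  rcases s.eq_empty_or_nonempty with rfl | ⟨α₀, hα₀⟩
  · simp
  have hprim : ∀ α ∈ s, ∃ β : ℤ√D, α = (g : ℤ) * β ∧ IsCoprime β.re β.im := by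
    intro α hα
    rw [← hg α hα]
    refine Zsqrtd.exists_coprime_of_gcd_pos ((Zsqrtd.gcd_pos_iff α).mpr ?_)
    rintro rfl
    exact hm ((hnorm 0 hα).symm.trans Zsqrtd.norm_zero)
  choose! prim hprim hcop using hprim
  have hmul : ∀ α ∈ s, m = g * g * (prim α).norm := by
    intro α hα
    rw [← hnorm α hα]
    nth_rw 1 [hprim α hα]
    rw [Zsqrtd.norm_mul, Zsqrtd.norm_intCast]
  have hgg : (g : ℤ) * g ≠ 0 := left_ne_zero_of_mul (hmul α₀ hα₀ ▸ hm)
  have hinj : Set.InjOn prim s := by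
    intro α hα β hβ heq
    rw [hprim α hα, hprim β hβ, heq]
  have hdiv : (prim α₀).norm.natAbs.divisors ⊆ m.natAbs.divisors :=
    Nat.divisors_subset_of_dvd (Int.natAbs_ne_zero.mpr hm)
      (Int.natAbs_dvd_natAbs.mpr (Dvd.intro_left _ (hmul α₀ hα₀).symm))
  rw [← Finset.card_image_of_injOn hinj]
  refine (card_le_of_norm_eq_of_isCoprime hD (right_ne_zero_of_mul (hmul α₀ hα₀ ▸ hm)) (U := U)
    ?_ ?_ ?_).trans (Nat.mul_le_mul_left _ (Finset.card_le_card hdiv)) <;>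
    rw [Finset.forall_mem_image] <;> intro α hα
  · exact mul_left_cancel₀ hgg ((hmul α hα).symm.trans (hmul α₀ hα₀))
  · refine le_trans ?_ (hU α hα)
    nth_rw 2 [hprim α hα]
    rw [Zsqrtd.re_smul, Int.natAbs_mul]
    exact Nat.le_mul_of_pos_left _ (Int.natAbs_pos.mpr (left_ne_zero_of_mul hgg))
  · exact hcop α hα

lemma card_le_of_norm_eq_of_squarefree {D m : ℤ} (hD : Squarefree D) (hm : m ≠ 0) {U : ℕ}
    {s : Finset (ℤ√D)} (hnorm : ∀ α ∈ s, α.norm = m) (hU : ∀ α ∈ s, α.re.natAbs ≤ U) :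
    s.card ≤ 9 * (Nat.log 2 (4 * U ^ 2 + 2) + 1) * m.natAbs.divisors.card ^ 2 := by
  rw [sq (Finset.card _), ← mul_assoc]
  refine Finset.card_le_mul_card_image_of_maps_to
    (f := fun α : ℤ√D ↦ Int.gcd α.re α.im) (fun α hα ↦ ?_) _ (fun g _ ↦ ?_)
  · refine Nat.mem_divisors.mpr ⟨?_, Int.natAbs_ne_zero.mpr hm⟩
    rw [← Int.natCast_dvd, ← hnorm α hα, Zsqrtd.norm_def]
    exact dvd_sub ((Int.gcd_dvd_left _ _).mul_left _) ((Int.gcd_dvd_right _ _).mul_left _)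
  · exact card_le_of_norm_eq_of_gcd_eq hD hm
      (fun α hα ↦ hnorm α (Finset.mem_filter.mp hα).1)
      (fun α hα ↦ hU α (Finset.mem_filter.mp hα).1) (fun α hα ↦ (Finset.mem_filter.mp hα).2)

lemma card_le_of_norm_eq {D m : ℤ} (hD : D ≠ 0) (hm : m ≠ 0) {U : ℕ} {s : Finset (ℤ√D)}
    (hnorm : ∀ α ∈ s, α.norm = m) (hU : ∀ α ∈ s, α.re.natAbs ≤ U) :
    s.card ≤ 9 * (Nat.log 2 (4 * U ^ 2 + 2) + 1) * m.natAbs.divisors.card ^ 2 := by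
  obtain ⟨f, d, hf, hd, rfl⟩ := exists_eq_sq_mul_squarefree hD
  let incl (α : ℤ√(f ^ 2 * d)) : ℤ√d := ⟨α.re, f * α.im⟩
  have hinj : Function.Injective incl := by
    intro α β h
    rw [Zsqrtd.mk.injEq] at h
    exact Zsqrtd.ext h.1 (mul_left_cancel₀ hf h.2)
  rw [← Finset.card_image_of_injective s hinj]
  refine card_le_of_norm_eq_of_squarefree hd hm ?_ ?_ <;>
    rw [Finset.forall_mem_image] <;> intro α hα
  · rw [← hnorm α hα, Zsqrtd.norm_def, Zsqrtd.norm_def]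
    ring
  · exact hU α hα

end NormEquation

section BinaryForm

lemma card_le_of_dvd {n : ℤ} (hn : n ≠ 0) {s : Finset ℤ} (hs : ∀ y ∈ s, y ∣ n) :
    s.card ≤ 2 * n.natAbs.divisors.card := by
  refine Finset.card_le_mul_card_image_of_maps_to (f := Int.natAbs) (fun y hy ↦ ?_) 2
    (fun d _ ↦ ?_)
  · exact Nat.mem_divisors.mpr ⟨Int.natAbs_dvd_natAbs.mpr (hs y hy), Int.natAbs_ne_zero.mpr hn⟩
  · calc _ ≤ ({(d : ℤ), -(d : ℤ)} : Finset ℤ).card := by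
          refine Finset.card_le_card fun y hy ↦ ?_
          simpa [← Int.natAbs_eq_iff] using (Finset.mem_filter.mp hy).2
      _ ≤ 2 := Finset.card_le_two

variable {t₁ t₂ t₃ n : ℤ} {s : Finset (ℤ × ℤ)}

lemma card_le_of_linear_mul_right (ht₂ : t₂ ≠ 0) (hn : n ≠ 0)
    (hs : ∀ p ∈ s, (t₂ * p.1 + t₃ * p.2) * p.2 = n) : s.card ≤ 2 * n.natAbs.divisors.card := by
  have hinj : Set.InjOn Prod.snd (s : Set (ℤ × ℤ)) := by
    intro p hp q hq hpq
    have hp2 : p.2 ≠ 0 := right_ne_zero_of_mul (hs p hp ▸ hn)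
    have hlin := mul_right_cancel₀ hp2 ((hs p hp).trans (hpq ▸ hs q hq).symm)
    rw [hpq, add_left_inj] at hlin
    exact Prod.ext (mul_left_cancel₀ ht₂ hlin) hpq
  rw [← Finset.card_image_of_injOn hinj]
  refine card_le_of_dvd hn ?_
  rw [Finset.forall_mem_image]
  exact fun p hp ↦ Dvd.intro_left _ (hs p hp)

lemma card_le_of_binary_form_eq (hD : discrim t₁ t₂ t₃ ≠ 0) (ht₁ : t₁ ≠ 0) (hn : n ≠ 0) {U : ℕ}
    (hs : ∀ p ∈ s, t₁ * p.1 ^ 2 + t₂ * p.1 * p.2 + t₃ * p.2 ^ 2 = n)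
    (hU : ∀ p ∈ s, (2 * t₁ * p.1 + t₂ * p.2).natAbs ≤ U) :
    s.card ≤ 9 * (Nat.log 2 (4 * U ^ 2 + 2) + 1) * (4 * t₁ * n).natAbs.divisors.card ^ 2 := by
  let toZsqrtd (p : ℤ × ℤ) : ℤ√(discrim t₁ t₂ t₃) := ⟨2 * t₁ * p.1 + t₂ * p.2, p.2⟩
  have hinj : Function.Injective toZsqrtd := by
    intro p q h
    obtain ⟨hre, him⟩ := Zsqrtd.mk.inj h
    rw [him, add_left_inj] at hre
    exact Prod.ext (mul_left_cancel₀ (mul_ne_zero two_ne_zero ht₁) hre) him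
  rw [← Finset.card_image_of_injective s hinj]
  refine card_le_of_norm_eq hD (mul_ne_zero (mul_ne_zero four_ne_zero ht₁) hn) ?_ ?_ <;>
    rw [Finset.forall_mem_image] <;> intro p hp
  · rw [← hs p hp, Zsqrtd.norm_def]
    simp only [toZsqrtd, discrim]
    ring
  · exact hU p hp

lemma natAbs_two_mul_mul_add_mul_le {N K : ℕ} {a b x y : ℤ} (ha : a.natAbs ≤ N)
    (hb : b.natAbs ≤ N) (hxy : x.natAbs + y.natAbs ≤ K) :
    (2 * a * x + b * y).natAbs ≤ 2 * N * K := by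
  calc (2 * a * x + b * y).natAbs ≤ 2 * a.natAbs * x.natAbs + b.natAbs * y.natAbs := by
        simpa [Int.natAbs_mul] using Int.natAbs_add_le (2 * a * x) (b * y)
    _ ≤ 2 * N * x.natAbs + 2 * N * y.natAbs := by
        gcongr
        exact hb.trans (Nat.le_mul_of_pos_left N two_pos)
    _ ≤ 2 * N * K := by
        rw [← mul_add]
        exact Nat.mul_le_mul_left _ hxy

lemma exists_card_le_of_binary_form_eq {N K : ℕ} (hD : discrim t₁ t₂ t₃ ≠ 0) (hn : n ≠ 0)
    (ht₁ : t₁.natAbs ≤ N) (ht₂ : t₂.natAbs ≤ N)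
    (hs : ∀ p ∈ s, t₁ * p.1 ^ 2 + t₂ * p.1 * p.2 + t₃ * p.2 ^ 2 = n)
    (hK : ∀ p ∈ s, p.1.natAbs + p.2.natAbs ≤ K) :
    ∃ m : ℕ, m ≠ 0 ∧ m ≤ 4 * N * n.natAbs ∧
      s.card ≤ 9 * (Nat.log 2 (4 * (2 * N * K) ^ 2 + 2) + 1) * m.divisors.card ^ 2 := by
  rcases eq_or_ne t₁ 0 with rfl | ht₁0
  · have ht₂0 : t₂ ≠ 0 := by
      rintro rfl
      simp [discrim] at hD
    have hcard : s.card ≤ 2 * n.natAbs.divisors.card :=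
      card_le_of_linear_mul_right (t₃ := t₃) ht₂0 hn
        fun p hp ↦ by linear_combination hs p hp
    have hN : 0 < N := (Int.natAbs_pos.mpr ht₂0).trans_le ht₂
    refine ⟨n.natAbs, Int.natAbs_ne_zero.mpr hn, Nat.le_mul_of_pos_left _ (by positivity),
      hcard.trans (Nat.mul_le_mul (by omega) (Nat.le_self_pow two_ne_zero _))⟩
  · refine ⟨(4 * t₁ * n).natAbs, by simp [ht₁0, hn], ?_,
      card_le_of_binary_form_eq hD ht₁0 hn hs
        fun p hp ↦ natAbs_two_mul_mul_add_mul_le ht₁ ht₂ (hK p hp)⟩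
    rw [Int.natAbs_mul, Int.natAbs_mul]
    exact Nat.mul_le_mul_right _ (Nat.mul_le_mul_left 4 ht₁)

end BinaryForm

section DivisorBound

lemma natCast_add_one_le_max_mul_pow {a y : ℝ} (ha : 0 < a) (hy : 1 + a ≤ y) (k : ℕ) :
    (k + 1 : ℝ) ≤ max 1 a⁻¹ * y ^ k := by
  have hmax : 1 ≤ max 1 a⁻¹ * a := by
    rw [← inv_mul_cancel₀ ha.ne']
    gcongr
    exact le_max_right _ _
  calc (k + 1 : ℝ) ≤ max 1 a⁻¹ * (1 + k * a) := by
        nlinarith [le_max_left 1 a⁻¹, Nat.cast_nonneg (α := ℝ) k]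
    _ ≤ max 1 a⁻¹ * (1 + a) ^ k := by
        gcongr
        exact one_add_mul_le_pow (by linarith) k
    _ ≤ max 1 a⁻¹ * y ^ k := by gcongr

lemma prod_ite_lt_le_pow {c : ℝ} (hc : 1 ≤ c) (s : Finset ℕ) (P : ℕ) :
    ∏ p ∈ s, (if p < P then c else 1) ≤ c ^ P := by
  rw [← Finset.prod_filter, Finset.prod_const]
  refine pow_le_pow_right₀ hc ?_
  calc (s.filter (· < P)).card ≤ (Finset.range P).card :=
        Finset.card_le_card fun p hp ↦ Finset.mem_range.mpr (Finset.mem_filter.mp hp).2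
    _ = P := Finset.card_range P

lemma exists_card_divisors_le_mul_rpow {ε : ℝ} (hε : 0 < ε) :
    ∃ C : ℝ, 0 < C ∧ ∀ n : ℕ, n ≠ 0 → (n.divisors.card : ℝ) ≤ C * (n : ℝ) ^ ε := by
  set a : ℝ := 2 ^ ε - 1 with ha
  have ha0 : 0 < a := sub_pos.mpr (Real.one_lt_rpow one_lt_two hε)
  obtain ⟨P, hP⟩ := exists_nat_ge ((2 : ℝ) ^ ε⁻¹)
  set c : ℝ := max 1 a⁻¹
  have hc : 1 ≤ c := le_max_left _ _
  refine ⟨c ^ P, by positivity, fun n hn ↦ ?_⟩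
  have hfactor : ∀ p ∈ n.primeFactors, (n.factorization p + 1 : ℝ) ≤
      (if p < P then c else 1) * ((p : ℝ) ^ n.factorization p) ^ ε := by
    intro p hp
    rw [← Real.rpow_pow_comm p.cast_nonneg]
    split_ifs with hpP
    · refine natCast_add_one_le_max_mul_pow ha0 ?_ _
      rw [ha, add_sub_cancel]
      gcongr
      exact_mod_cast (Nat.prime_of_mem_primeFactors hp).two_le
    · have h2p : 1 + 1 ≤ (p : ℝ) ^ ε := by
        rw [one_add_one_eq_two, ← Real.rpow_inv_le_iff_of_pos zero_le_two p.cast_nonneg hε]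
        exact hP.trans (by exact_mod_cast not_lt.mp hpP)
      simpa using natCast_add_one_le_max_mul_pow one_pos h2p (n.factorization p)
  calc (n.divisors.card : ℝ) = ∏ p ∈ n.primeFactors, (n.factorization p + 1 : ℝ) := by
        rw [Nat.card_divisors hn]
        push_cast
        rfl
    _ ≤ ∏ p ∈ n.primeFactors, ((if p < P then c else 1) * ((p : ℝ) ^ n.factorization p) ^ ε) :=
        Finset.prod_le_prod (fun _ _ ↦ by positivity) hfactor
    _ = (∏ p ∈ n.primeFactors, if p < P then c else 1) * (n : ℝ) ^ ε := by
        rw [Finset.prod_mul_distrib, Real.finsetProd_rpow _ _ fun _ _ ↦ by positivity]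
        congr 2
        exact_mod_cast (Nat.prod_primeFactors_pow_factorization hn).symm
    _ ≤ c ^ P * (n : ℝ) ^ ε := by
        gcongr
        exact prod_ite_lt_le_pow hc _ P

-- `Nat.log 2 n + 1` is the number of divisors of the power of two `2 ^ Nat.log 2 n ≤ n`.
lemma log_two_add_one_le_mul_rpow {C ε : ℝ} (hC : 0 ≤ C) (hε : 0 ≤ ε)
    (hdiv : ∀ n : ℕ, n ≠ 0 → (n.divisors.card : ℝ) ≤ C * (n : ℝ) ^ ε) {n : ℕ} (hn : n ≠ 0) :
    (Nat.log 2 n + 1 : ℝ) ≤ C * (n : ℝ) ^ ε := by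
  calc (Nat.log 2 n + 1 : ℝ) = (2 ^ Nat.log 2 n).divisors.card := by
        simp [Nat.divisors_prime_pow Nat.prime_two]
    _ ≤ C * ((2 ^ Nat.log 2 n : ℕ) : ℝ) ^ ε := hdiv _ (by positivity)
    _ ≤ C * (n : ℝ) ^ ε := by
        gcongr
        exact Nat.pow_log_le_self 2 hn

lemma cast_four_mul_sq_add_two_le {N K : ℕ} {Q : ℝ} (hQ : 1 ≤ Q) (hNK : (N * K : ℝ) ≤ Q) :
    ((4 * (2 * N * K) ^ 2 + 2 : ℕ) : ℝ) ≤ 18 * Q ^ 2 := by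
  calc ((4 * (2 * N * K) ^ 2 + 2 : ℕ) : ℝ) = 16 * (N * K : ℝ) ^ 2 + 2 * 1 ^ 2 := by
        push_cast
        ring
    _ ≤ 16 * Q ^ 2 + 2 * Q ^ 2 := by gcongr
    _ = 18 * Q ^ 2 := by ring

lemma mul_log_two_mul_card_divisors_sq_le {C δ Q : ℝ} (hC : 0 ≤ C) (hδ : 0 ≤ δ) (hQ : 0 < Q)
    (hdiv : ∀ n : ℕ, n ≠ 0 → (n.divisors.card : ℝ) ≤ C * (n : ℝ) ^ δ)
    {A m : ℕ} (hA : A ≠ 0) (hm : m ≠ 0) (hAQ : (A : ℝ) ≤ 18 * Q ^ 2) (hmQ : (m : ℝ) ≤ 4 * Q) :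
    (9 * (Nat.log 2 A + 1) * m.divisors.card ^ 2 : ℝ) ≤ 9 * C ^ 3 * 288 ^ δ * Q ^ (4 * δ) := by
  calc (9 * (Nat.log 2 A + 1) * m.divisors.card ^ 2 : ℝ)
      ≤ 9 * (C * (A : ℝ) ^ δ) * (C * (m : ℝ) ^ δ) ^ 2 := by
        gcongr
        · exact log_two_add_one_le_mul_rpow hC hδ hdiv hA
        · exact hdiv m hm
    _ ≤ 9 * (C * (18 * Q ^ 2) ^ δ) * (C * (4 * Q) ^ δ) ^ 2 := by gcongr
    _ = 9 * C ^ 3 * (18 * Q ^ 2 * (4 * Q) ^ 2) ^ δ := by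
        rw [mul_pow C, Real.rpow_pow_comm (by positivity),
          Real.mul_rpow (x := 18 * Q ^ 2) (by positivity) (by positivity)]
        ring
    _ = 9 * C ^ 3 * 288 ^ δ * Q ^ (4 * δ) := by
        rw [show 18 * Q ^ 2 * (4 * Q) ^ 2 = 288 * Q ^ 4 by ring,
          Real.mul_rpow (by norm_num) (by positivity), Real.rpow_mul hQ.le, mul_assoc (9 * C ^ 3)]
        norm_cast

lemma mul_log_two_mul_card_divisors_sq_le_of_le {C δ X : ℝ} (hC : 0 ≤ C) (hδ : 0 ≤ δ)
    (hdiv : ∀ n : ℕ, n ≠ 0 → (n.divisors.card : ℝ) ≤ C * (n : ℝ) ^ δ) (hX : 1 ≤ X)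
    {N K n m : ℕ} (hK : (K : ℝ) ≤ X) (hm : m ≠ 0) (hmN : m ≤ 4 * N * n) :
    (9 * (Nat.log 2 (4 * (2 * N * K) ^ 2 + 2) + 1) * m.divisors.card ^ 2 : ℝ) ≤
      9 * C ^ 3 * 288 ^ δ * (n * X * N) ^ (4 * δ) := by
  obtain ⟨hN, hn⟩ : 1 ≤ N ∧ 1 ≤ n := by
    have hpos : 0 < 4 * N * n := (Nat.pos_of_ne_zero hm).trans_le hmN
    exact ⟨Nat.pos_of_mul_pos_left (Nat.pos_of_mul_pos_right hpos), Nat.pos_of_mul_pos_left hpos⟩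
  have hN' : (1 : ℝ) ≤ N := by exact_mod_cast hN
  have hn' : (1 : ℝ) ≤ n := by exact_mod_cast hn
  have hXN : 1 ≤ X * N := one_le_mul_of_one_le_of_one_le hX hN'
  have hQ : 1 ≤ n * X * N := by
    rw [mul_assoc]
    exact one_le_mul_of_one_le_of_one_le hn' hXN
  refine mul_log_two_mul_card_divisors_sq_le hC hδ (by linarith) hdiv (by positivity) hm
    (cast_four_mul_sq_add_two_le hQ ?_) ?_
  · calc (N * K : ℝ) ≤ 1 * (N * X) := by rw [one_mul]; gcongr
      _ ≤ n * (N * X) := by gcongr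
      _ = n * X * N := by ring
  · calc (m : ℝ) ≤ 4 * N * n := by exact_mod_cast hmN
      _ = 4 * (n * 1 * N) := by ring
      _ ≤ 4 * (n * X * N) := by gcongr

end DivisorBound

lemma finite_setOf_natAbs_add_natAbs_le (K : ℕ) :
    {p : ℤ × ℤ | p.1.natAbs + p.2.natAbs ≤ K}.Finite := by
  refine (Set.finite_Icc ((-K, -K) : ℤ × ℤ) (K, K)).subset fun p hp ↦ ?_
  rw [Set.mem_ofPred_eq] at hp
  rw [Set.mem_Icc, Prod.le_def, Prod.le_def]
  omega

theorem stmt6 : ∀ ε : ℝ, 0 < ε → ∃ Cst : ℝ, 0 < Cst ∧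
    ∀ t₁ t₂ t₃ : ℤ, 4 * t₁ * t₃ - t₂ ^ 2 ≠ 0 →
    ∀ X : ℝ, 1 ≤ X → ∀ n : ℤ, n ≠ 0 →
      (Set.ncard {xy : ℤ × ℤ |
          t₁ * xy.1 ^ 2 + t₂ * xy.1 * xy.2 + t₃ * xy.2 ^ 2 = n ∧
          ((|xy.1| + |xy.2| : ℤ) : ℝ) ≤ X} : ℝ) ≤
        Cst * (((|n| : ℤ) : ℝ) * X *
          (max (|(t₁ : ℝ)|) (max (|(t₂ : ℝ)|) (|(t₃ : ℝ)|)))) ^ ε := by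
  intro ε hε
  obtain ⟨C, hC, hdiv⟩ := exists_card_divisors_le_mul_rpow (div_pos hε four_pos)
  refine ⟨9 * C ^ 3 * 288 ^ (ε / 4), by positivity, fun t₁ t₂ t₃ hT X hX n hn ↦ ?_⟩
  have hD : discrim t₁ t₂ t₃ ≠ 0 := by rwa [discrim, ← neg_sub, neg_ne_zero]
  set S : Set (ℤ × ℤ) := {xy | _ ∧ _}
  set N : ℕ := max t₁.natAbs (max t₂.natAbs t₃.natAbs) with hN
  have hSX : ∀ p ∈ S, p.1.natAbs + p.2.natAbs ≤ ⌊X⌋₊ := fun p hp ↦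
    Nat.le_floor (by simpa [Nat.cast_natAbs] using hp.2)
  have hS : S.Finite := (finite_setOf_natAbs_add_natAbs_le ⌊X⌋₊).subset hSX
  obtain ⟨m, hm, hmN, hcard⟩ := exists_card_le_of_binary_form_eq (s := hS.toFinset) (N := N) hD hn
    (le_max_left _ _) ((le_max_left _ _).trans (le_max_right _ _))
    (fun p hp ↦ (hS.mem_toFinset.mp hp).1) (fun p hp ↦ hSX p (hS.mem_toFinset.mp hp))
  calc (S.ncard : ℝ)
      ≤ 9 * (Nat.log 2 (4 * (2 * N * ⌊X⌋₊) ^ 2 + 2) + 1) * m.divisors.card ^ 2 := by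
        rw [Set.ncard_eq_toFinset_card S hS]
        exact_mod_cast hcard
    _ ≤ 9 * C ^ 3 * 288 ^ (ε / 4) * (n.natAbs * X * N) ^ (4 * (ε / 4)) :=
        mul_log_two_mul_card_divisors_sq_le_of_le hC.le (by positivity) hdiv hX
          (Nat.floor_le (by linarith)) hm hmN
    _ = _ := by
        rw [mul_div_cancel₀ ε four_ne_zero]
        simp [hN, Nat.cast_natAbs]
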